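/- arXiv:1007.0646 — 5 statements merged into one kernel-verified Lean document; each statement's English description precedes it below -/
import Mathlib

section
/- For every partition λ = (λ_1 ≥ … ≥ λ_{n−1} ≥ 0), the number of semistandard PBW-tableaux of shape λ equals the number of classical semistandard Young tableaux of shape λ with entries in {1,…,n} (this common number is the dimension of the irreducible sl_n(ℂ)-module with highest weight λ). -/
open scoped BigOperators

/-- `lam` is the shape of a partition with at most `n-1` rows (rows indexed `1,…,n-1`). -/
def IsShape (n : ℕ) (lam : ℕ → ℕ) : Prop :=
  (∀ i, lam (i + 1) ≤ lam i) ∧ (∀ i, n ≤ i → lam i = 0)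

/-- `(i,j)` is a box of the Young diagram of `lam`. -/
def IsBox (lam : ℕ → ℕ) (i j : ℕ) : Prop :=
  1 ≤ i ∧ 1 ≤ j ∧ j ≤ lam i

/-- The length `μ_j` of the `j`-th column of the Young diagram of `lam`. -/
def colLen (n : ℕ) (lam : ℕ → ℕ) (j : ℕ) : ℕ :=
  ((Finset.Icc 1 (n - 1)).filter (fun i => j ≤ lam i)).card

/-- A PBW-tableau of shape `lam` with entries in `{1,…,n}`: entries `≤ μ_j` equal their row
index, and in each column the entries different from the row index strictly decrease
downwards. -/
def IsPBWTableau (n : ℕ) (lam : ℕ → ℕ) (T : ℕ → ℕ → ℕ) : Prop :=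
  (∀ i j, IsBox lam i j → 1 ≤ T i j ∧ T i j ≤ n) ∧
  (∀ i j, IsBox lam i j → T i j ≤ colLen n lam j → T i j = i) ∧
  (∀ i₁ i₂ j, IsBox lam i₁ j → IsBox lam i₂ j → i₁ < i₂ → T i₁ j ≠ i₁ →
    T i₂ j < T i₁ j)

/-- A semistandard PBW-tableau of shape `lam`. -/
def IsSSPBWTableau (n : ℕ) (lam : ℕ → ℕ) (T : ℕ → ℕ → ℕ) : Prop :=
  IsPBWTableau n lam T ∧
  ∀ i j, IsBox lam i j → 2 ≤ j →
    ∃ i₁, i ≤ i₁ ∧ IsBox lam i₁ (j - 1) ∧ T i j ≤ T i₁ (j - 1)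

/-- The set of semistandard PBW-tableaux of shape `lam` (normalized to be `0` off the
diagram). -/
def SSPBWTableaux (n : ℕ) (lam : ℕ → ℕ) : Set (ℕ → ℕ → ℕ) :=
  {T | IsSSPBWTableau n lam T ∧ ∀ i j, ¬ IsBox lam i j → T i j = 0}

/-- The set of classical semistandard Young tableaux of shape `lam` with entries in
`{1,…,n}`: weakly increasing along rows, strictly increasing down columns (normalized to
be `0` off the diagram). -/
def SSYT (n : ℕ) (lam : ℕ → ℕ) : Set (ℕ → ℕ → ℕ) :=
  {T | (∀ i j, IsBox lam i j → 1 ≤ T i j ∧ T i j ≤ n) ∧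
       (∀ i j, IsBox lam i j → IsBox lam i (j + 1) → T i j ≤ T i (j + 1)) ∧
       (∀ i j, IsBox lam i j → IsBox lam (i + 1) j → T i j < T (i + 1) j) ∧
       (∀ i j, ¬ IsBox lam i j → T i j = 0)}


lemma isBox_iff (n : ℕ) (lam : ℕ → ℕ) (h : IsShape n lam) (i j : ℕ) :
    IsBox lam i j ↔ 1 ≤ i ∧ 1 ≤ j ∧ i ≤ colLen n lam j := by
  have anti : Antitone lam := antitone_nat_of_succ_le h.1
  unfold IsBox colLen
  constructor
  · rintro ⟨hi, hj, hl⟩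
    refine ⟨hi, hj, ?_⟩
    have hin : i < n := by
      by_contra hc
      have := h.2 i (by omega)
      omega
    have : Finset.Icc 1 i ⊆ (Finset.Icc 1 (n - 1)).filter (fun i => j ≤ lam i) := by
      intro k hk
      simp only [Finset.mem_Icc, Finset.mem_filter] at hk ⊢
      have := anti hk.2
      omega
    simpa using Finset.card_le_card this
  · rintro ⟨hi, hj, hl⟩
    refine ⟨hi, hj, ?_⟩
    by_contra hc
    have : (Finset.Icc 1 (n - 1)).filter (fun i => j ≤ lam i) ⊆ Finset.Icc 1 (i - 1) := by
      intro k hk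
      simp only [Finset.mem_Icc, Finset.mem_filter] at hk ⊢
      by_contra hk2
      have := anti (show i ≤ k by omega)
      omega
    have := Finset.card_le_card this
    simp only [Nat.card_Icc] at this
    omega

lemma colLen_le (n : ℕ) (lam : ℕ → ℕ) (j : ℕ) : colLen n lam j ≤ n - 1 := by
  unfold colLen
  simpa using Finset.card_filter_le (Finset.Icc 1 (n - 1)) (fun i => j ≤ lam i)

lemma colLen_anti (n : ℕ) (lam : ℕ → ℕ) (j : ℕ) : colLen n lam (j + 1) ≤ colLen n lam j := by
  unfold colLen
  apply Finset.card_le_card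
  intro k hk
  simp only [Finset.mem_filter] at hk ⊢
  exact ⟨hk.1, by omega⟩

/-- running maximum from below -/
def mx (c : ℕ) (T : ℕ → ℕ) (i : ℕ) : ℕ := max c ((Finset.Icc i c).sup T)

lemma mx_top (c : ℕ) (T : ℕ → ℕ) (i : ℕ) (h : c < i) : mx c T i = c := by
  simp [mx, Finset.Icc_eq_empty_of_lt h]

lemma mx_succ (c : ℕ) (T : ℕ → ℕ) (i : ℕ) (h : i ≤ c) :
    mx c T i = max (T i) (mx c T (i + 1)) := by
  unfold mx
  rw [← Finset.insert_Icc_add_one_left_eq_Icc h, Finset.sup_insert]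
  change max c (max (T i) _) = _
  rw [max_left_comm]

lemma le_mx (c : ℕ) (T : ℕ → ℕ) (i : ℕ) : c ≤ mx c T i := le_max_left _ _

lemma le_mx' (c : ℕ) (T : ℕ → ℕ) (i k : ℕ) (h : i ≤ k) (hk : k ≤ c) : T k ≤ mx c T i :=
  le_max_of_le_right (Finset.le_sup (f := T) (Finset.mem_Icc.2 ⟨h, hk⟩))

lemma mx_le (c : ℕ) (T : ℕ → ℕ) (i b : ℕ) (hc : c ≤ b) (h : ∀ k, i ≤ k → k ≤ c → T k ≤ b) :
    mx c T i ≤ b :=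
  max_le hc (Finset.sup_le fun k hk => h k (Finset.mem_Icc.1 hk).1 (Finset.mem_Icc.1 hk).2)

lemma mx_attained (c : ℕ) (T : ℕ → ℕ) (i : ℕ) (hi : i ≤ c) (hT : c ≤ T c) :
    ∃ k, i ≤ k ∧ k ≤ c ∧ mx c T i ≤ T k := by
  obtain ⟨k, hk, he⟩ := Finset.exists_mem_eq_sup (Finset.Icc i c) ⟨i, by simp [hi]⟩ T
  have hk' := Finset.mem_Icc.1 hk
  have h2 : T c ≤ T k := by
    rw [← he]; exact Finset.le_sup (f := T) (Finset.mem_Icc.2 ⟨hi, le_rfl⟩)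
  exact ⟨k, hk'.1, hk'.2, by unfold mx; rw [he]; exact max_le (hT.trans h2) le_rfl⟩

/-- column profile recovered from a classical column -/
def prof (n c : ℕ) (S : ℕ → ℕ) (i : ℕ) : ℕ := if i ≤ c then n + i - S i else c

/-- inverse column map -/
def inv (m : ℕ → ℕ) (i : ℕ) : ℕ := if m (i + 1) < m i then m i else i

lemma mx_inv (c : ℕ) (T m : ℕ → ℕ) (hc : ∀ i, 1 ≤ i → c ≤ m i) (htop : m (c + 1) = c)
    (hm : ∀ i, 1 ≤ i → i ≤ c → m (i + 1) ≤ m i)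
    (hT : ∀ i, 1 ≤ i → i ≤ c → T i = inv m i) (d i : ℕ) (hi : 1 ≤ i) (hd : i + d = c + 1) :
    mx c T i = m i := by
  induction d generalizing i with
  | zero => rw [mx_top _ _ _ (by omega), show i = c + 1 by omega, htop]
  | succ d ih =>
    rw [mx_succ _ _ _ (by omega), ih (i + 1) (by omega) (by omega), hT i hi (by omega)]
    have := hm i hi (by omega)
    have := hc (i + 1) (by omega)
    unfold inv
    split_ifs <;> omega

lemma inv_mx (c : ℕ) (T : ℕ → ℕ)
    (h1 : ∀ i, 1 ≤ i → i ≤ c → T i ≤ c → T i = i)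
    (h2 : ∀ i k, 1 ≤ i → i < k → k ≤ c → T i ≠ i → T k < T i) (i : ℕ) (hi : 1 ≤ i) (hic : i ≤ c) :
    inv (mx c T) i = T i := by
  have hs := mx_succ c T i hic
  have hl := le_mx c T (i + 1)
  unfold inv
  by_cases h : T i = i
  · split_ifs <;> omega
  · have hc : c < T i := by
      by_contra h'
      exact h (h1 i hi hic (by omega))
    have : mx c T (i + 1) ≤ T i - 1 := by
      apply mx_le _ _ _ _ (by omega)
      intro k hk hkc
      have := h2 i k hi (by omega) hkc h
      omega
    split_ifs <;> omega

lemma anti_of (c : ℕ) (m : ℕ → ℕ) (hm : ∀ i, 1 ≤ i → i ≤ c → m (i + 1) ≤ m i)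
    (i k : ℕ) (hi : 1 ≤ i) (hik : i ≤ k) (hk : k ≤ c + 1) : m k ≤ m i := by
  induction k, hik using Nat.le_induction with
  | base => exact le_rfl
  | succ k hik ih => exact (hm k (by omega) (by omega)).trans (ih (by omega))

/-- strict columns force `S i + (c - i) ≤ n` -/
lemma strict_bd (n c : ℕ) (S : ℕ → ℕ) (hb : ∀ i, 1 ≤ i → i ≤ c → S i ≤ n)
    (hs : ∀ i, 1 ≤ i → i + 1 ≤ c → S i < S (i + 1)) (d i : ℕ) (hi : 1 ≤ i) (hd : i + d = c) :
    S i + d ≤ n := by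
  induction d generalizing i with
  | zero => exact hb i hi (by omega)
  | succ d ih =>
    have := ih (i + 1) (by omega) (by omega)
    have := hs i hi (by omega)
    omega

lemma prof_facts (n c : ℕ) (S : ℕ → ℕ) (hb : ∀ i, 1 ≤ i → i ≤ c → 1 ≤ S i ∧ S i ≤ n)
    (hs : ∀ i, 1 ≤ i → i + 1 ≤ c → S i < S (i + 1)) :
    (∀ i, 1 ≤ i → c ≤ prof n c S i) ∧ prof n c S (c + 1) = c ∧
    (∀ i, 1 ≤ i → i ≤ c → prof n c S (i + 1) ≤ prof n c S i) := by
  have key : ∀ i, 1 ≤ i → i ≤ c → S i + (c - i) ≤ n := fun i hi hc =>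
    strict_bd n c S (fun i h h' => (hb i h h').2) hs (c - i) i hi (by omega)
  refine ⟨?_, by simp [prof], ?_⟩
  · intro i hi
    unfold prof
    split_ifs with h
    · have := key i hi h
      omega
    · exact le_rfl
  · intro i hi hc
    have := key i hi hc
    unfold prof
    split_ifs with h
    · have := hs i hi h
      omega
    · omega

open Classical in
/-- the map from PBW tableaux to classical ones -/
noncomputable def toS (n : ℕ) (lam : ℕ → ℕ) (T : ℕ → ℕ → ℕ) : ℕ → ℕ → ℕ := fun i j =>
  if IsBox lam i j then n + i - mx (colLen n lam j) (fun k => T k j) i else 0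

open Classical in
/-- the map from classical tableaux to PBW ones -/
noncomputable def toT (n : ℕ) (lam : ℕ → ℕ) (S : ℕ → ℕ → ℕ) : ℕ → ℕ → ℕ := fun i j =>
  if IsBox lam i j then inv (prof n (colLen n lam j) (fun k => S k j)) i else 0

lemma inv_congr (m m' : ℕ → ℕ) (i : ℕ) (h : m i = m' i) (h' : m (i + 1) = m' (i + 1)) :
    inv m i = inv m' i := by simp [inv, h, h']

lemma toS_mem (n : ℕ) (hn : 2 ≤ n) (lam : ℕ → ℕ) (hlam : IsShape n lam) (T : ℕ → ℕ → ℕ)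
    (hT : T ∈ SSPBWTableaux n lam) :
    toS n lam T ∈ SSYT n lam := by
  obtain ⟨⟨⟨hb, h1, h2⟩, hss⟩, h0⟩ := hT
  have hbox := isBox_iff n lam hlam
  have hmle : ∀ i j, IsBox lam i j → mx (colLen n lam j) (fun k => T k j) i ≤ n := by
    intro i j h
    apply mx_le
    · have := colLen_le n lam j
      omega
    · intro k hk hkc
      rw [hbox] at h
      exact (hb k j ((hbox k j).2 ⟨by omega, h.2.1, hkc⟩)).2
  refine ⟨?_, ?_, ?_, ?_⟩
  · intro i j h
    have h3 := hmle i j h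
    have h4 := le_mx (colLen n lam j) (fun k => T k j) i
    have h5 := (hbox i j).1 h
    simp only [toS, h, if_true]
    omega
  · intro i j h h'
    have h3 := hmle i j h
    have h4 := le_mx (colLen n lam j) (fun k => T k j) i
    have h5 := (hbox i j).1 h
    have h6 := (hbox i (j+1)).1 h'
    simp only [toS, h, h', if_true]
    have : mx (colLen n lam (j + 1)) (fun k => T k (j + 1)) i
        ≤ mx (colLen n lam j) (fun k => T k j) i := by
      apply mx_le
      · exact (colLen_anti n lam j).trans h4
      · intro k hk hkc
        obtain ⟨l, hl, hlb, hle⟩ := hss k (j + 1) ((hbox _ _).2 ⟨by omega, by omega, hkc⟩) (by omega)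
        simp only [Nat.add_sub_cancel] at hlb hle
        exact hle.trans (le_mx' _ (fun k => T k j) i l (by omega) ((hbox _ _).1 hlb).2.2)
    omega
  · intro i j h h'
    have h3 := hmle i j h
    have h5 := (hbox i j).1 h
    have h7 := mx_succ (colLen n lam j) (fun k => T k j) i h5.2.2
    simp only [toS, h, h', if_true]
    omega
  · intro i j h
    simp [toS, h]

lemma S_facts (n : ℕ) (lam : ℕ → ℕ) (hlam : IsShape n lam) (S : ℕ → ℕ → ℕ)
    (hS : S ∈ SSYT n lam) (j : ℕ) (hj : 1 ≤ j) (m : ℕ → ℕ)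
    (hmdef : m = prof n (colLen n lam j) (fun k => S k j)) :
    (∀ i, 1 ≤ i → colLen n lam j ≤ m i) ∧ m (colLen n lam j + 1) = colLen n lam j ∧
    (∀ i, 1 ≤ i → i ≤ colLen n lam j → m (i + 1) ≤ m i) ∧
    (∀ i, 1 ≤ i → mx (colLen n lam j) (fun k => toT n lam S k j) i = m i) := by
  obtain ⟨hb, hr, hc, h0⟩ := hS
  have hbox := isBox_iff n lam hlam
  obtain ⟨a, b, c⟩ := prof_facts n (colLen n lam j) (fun k => S k j)
    (fun i hi hic => hb i j ((hbox i j).2 ⟨hi, hj, hic⟩))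
    (fun i hi hic => hc i j ((hbox i j).2 ⟨hi, hj, by omega⟩) ((hbox _ j).2 ⟨by omega, hj, hic⟩))
  rw [← hmdef] at a b c
  refine ⟨a, b, c, ?_⟩
  intro i hi
  by_cases hic : i ≤ colLen n lam j
  · apply mx_inv _ _ m a b c _ (colLen n lam j + 1 - i) i hi (by omega)
    intro k hk hkc
    simp [toT, (hbox k j).2 ⟨hk, hj, hkc⟩, hmdef]
  · rw [mx_top _ _ _ (by omega), hmdef]
    simp [prof, hic]

lemma toT_mem (n : ℕ) (hn : 2 ≤ n) (lam : ℕ → ℕ) (hlam : IsShape n lam) (S : ℕ → ℕ → ℕ)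
    (hS : S ∈ SSYT n lam) : toT n lam S ∈ SSPBWTableaux n lam := by
  have hF := S_facts n lam hlam S hS
  obtain ⟨hb, hr, hc, h0⟩ := hS
  have hbox := isBox_iff n lam hlam
  have hval : ∀ i j, IsBox lam i j →
      prof n (colLen n lam j) (fun k => S k j) i = n + i - S i j := by
    intro i j h
    simp [prof, ((hbox i j).1 h).2.2]
  have hge : ∀ i j, IsBox lam i j → i ≤ toT n lam S i j := by
    intro i j h
    have h5 := (hbox i j).1 h
    obtain ⟨a, b, c, d⟩ := hF j h5.2.1 _ rfl
    have := a i h5.1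
    simp only [toT, h, if_true, inv]
    split_ifs <;> omega
  refine ⟨⟨⟨?_, ?_, ?_⟩, ?_⟩, ?_⟩
  · intro i j h
    have h5 := (hbox i j).1 h
    refine ⟨h5.1.trans (hge i j h), ?_⟩
    have h6 := colLen_le n lam j
    simp only [toT, h, if_true, inv]
    split_ifs
    · rw [hval i j h]
      -- bound: prof antitone, first value at most n
      obtain ⟨a, b, c, d⟩ := hF j h5.2.1 _ rfl
      have h1b : IsBox lam 1 j := (hbox _ _).2 ⟨le_rfl, h5.2.1, by omega⟩
      have := anti_of _ _ c 1 i le_rfl h5.1 (by omega)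
      rw [hval i j h, hval 1 j h1b] at this
      have := (hb 1 j h1b).1
      omega
    · omega
  · intro i j h hle
    have h5 := (hbox i j).1 h
    obtain ⟨a, b, c, d⟩ := hF j h5.2.1 _ rfl
    have := a (i + 1) (by omega)
    simp only [toT, h, if_true, inv] at hle ⊢
    split_ifs at hle ⊢ <;> omega
  · intro i k j h hk hik hne
    have h5 := (hbox i j).1 h
    have h6 := (hbox k j).1 hk
    obtain ⟨a, b, c, d⟩ := hF j h5.2.1 _ rfl
    have h7 := anti_of _ _ c (i + 1) k (by omega) (by omega) (by omega)
    have := a k (by omega)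
    simp only [toT, h, hk, if_true, inv] at hne ⊢
    split_ifs at hne ⊢ <;> omega
  · intro i j h hj
    obtain ⟨j, rfl⟩ : ∃ l, j = l + 1 := ⟨j - 1, by omega⟩
    simp only [Nat.add_sub_cancel]
    have h5 := (hbox i (j + 1)).1 h
    have h6 := colLen_anti n lam j
    have h' : IsBox lam i j := (hbox i j).2 ⟨h5.1, by omega, by omega⟩
    obtain ⟨a, b, c, d⟩ := hF j (by omega) _ rfl
    obtain ⟨a', b', c', d'⟩ := hF (j + 1) (by omega) _ rfl
    have hcb : IsBox lam (colLen n lam j) j := (hbox _ _).2 ⟨by omega, by omega, le_rfl⟩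
    obtain ⟨l, hl, hlc, hle⟩ := mx_attained (colLen n lam j) (fun k => toT n lam S k j) i
      (by omega) (hge _ _ hcb)
    refine ⟨l, hl, (hbox _ _).2 ⟨by omega, by omega, hlc⟩, le_trans ?_ hle⟩
    have e1 := le_mx' (colLen n lam (j + 1)) (fun k => toT n lam S k (j + 1)) i i le_rfl h5.2.2
    refine e1.trans ?_
    rw [d i h5.1, d' i h5.1, hval i j h', hval i (j + 1) h]
    have := hr i j h' h
    omega
  · intro i j h
    simp [toT, h]

lemma toT_toS (n : ℕ) (hn : 2 ≤ n) (lam : ℕ → ℕ) (hlam : IsShape n lam) (T : ℕ → ℕ → ℕ)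
    (hT : T ∈ SSPBWTableaux n lam) : toT n lam (toS n lam T) = T := by
  obtain ⟨⟨⟨hb, h1, h2⟩, hss⟩, h0⟩ := hT
  have hbox := isBox_iff n lam hlam
  funext i j
  by_cases h : IsBox lam i j
  · have h5 := (hbox i j).1 h
    have hp : ∀ k, i ≤ k → prof n (colLen n lam j) (fun k => toS n lam T k j) k
        = mx (colLen n lam j) (fun k => T k j) k := by
      intro k hk
      unfold prof
      split_ifs with hkc
      · have hkb : IsBox lam k j := (hbox _ _).2 ⟨by omega, h5.2.1, hkc⟩
        have : mx (colLen n lam j) (fun k => T k j) k ≤ n := by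
          apply mx_le
          · have := colLen_le n lam j
            omega
          · intro l hl hlc
            exact (hb l j ((hbox l j).2 ⟨by omega, h5.2.1, hlc⟩)).2
        simp only [toS, hkb, if_true]
        omega
      · rw [mx_top _ _ _ (by omega)]
    simp only [toT, h, if_true]
    rw [inv_congr _ _ i (hp i le_rfl) (hp (i + 1) (by omega))]
    exact inv_mx _ (fun k => T k j)
      (fun k hk hkc => h1 k j ((hbox _ _).2 ⟨hk, h5.2.1, hkc⟩))
      (fun k l hk hkl hlc => h2 k l j ((hbox _ _).2 ⟨hk, h5.2.1, by omega⟩)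
        ((hbox _ _).2 ⟨by omega, h5.2.1, hlc⟩) hkl) i h5.1 h5.2.2
  · simp [toT, h, h0 i j h]

lemma toS_toT (n : ℕ) (lam : ℕ → ℕ) (hlam : IsShape n lam) (S : ℕ → ℕ → ℕ)
    (hS : S ∈ SSYT n lam) : toS n lam (toT n lam S) = S := by
  have hF := S_facts n lam hlam S hS
  obtain ⟨hb, hr, hc, h0⟩ := hS
  have hbox := isBox_iff n lam hlam
  funext i j
  by_cases h : IsBox lam i j
  · have h5 := (hbox i j).1 h
    obtain ⟨a, b, c, d⟩ := hF j h5.2.1 _ rfl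
    simp only [toS, h, if_true]
    rw [d i h5.1]
    have := hb i j h
    simp only [prof, h5.2.2, if_true]
    omega
  · simp [toS, h, h0 i j h]

/-- For every partition `λ`, the number of semistandard PBW-tableaux of
shape `λ` equals the number of classical semistandard Young tableaux of shape `λ` with
entries in `{1,…,n}`. -/
theorem card_pbw_tableaux_eq_card_ssyt (n : ℕ) (hn : 2 ≤ n)
    (lam : ℕ → ℕ) (hlam : IsShape n lam) :
    Nat.card (SSPBWTableaux n lam) = Nat.card (SSYT n lam) :=
  Nat.card_congr
    { toFun := fun T => ⟨toS n lam T.1, toS_mem n hn lam hlam T.1 T.2⟩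
      invFun := fun S => ⟨toT n lam S.1, toT_mem n hn lam hlam S.1 S.2⟩
      left_inv := fun T => Subtype.ext (toT_toS n hn lam hlam T.1 T.2)
      right_inv := fun S => Subtype.ext (toS_toT n lam hlam S.1 S.2) }
end

section
/- Let T be a semistandard PBW-tableau of shape λ. If j_1 < j_2 are columns such that the boxes (i,j_1) and (i,j_2) lie in Y_λ and T_{i,j_1} = T_{i,j_2} ≠ i, then T_{i,j} = T_{i,j_1} for all j with j_1 ≤ j ≤ j_2. -/
open scoped BigOperators

theorem sspbw_chain (n : ℕ) (lam : ℕ → ℕ)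
    (T : ℕ → ℕ → ℕ) (hT : IsSSPBWTableau n lam T) (j₁ : ℕ) (h1 : 1 ≤ j₁) (d : ℕ) :
    ∀ k, IsBox lam k (j₁ + d) → ∃ k₁, k ≤ k₁ ∧ IsBox lam k₁ j₁ ∧ T k (j₁ + d) ≤ T k₁ j₁ := by
  induction d with
  | zero => intro k hk; exact ⟨k, le_rfl, hk, le_rfl⟩
  | succ d ih =>
    intro k hk
    obtain ⟨a, ha, hab, haT⟩ := hT.2 k (j₁ + (d + 1)) hk (by omega)
    have e : j₁ + (d + 1) - 1 = j₁ + d := by omega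
    rw [e] at hab haT
    obtain ⟨b, hb, hbb, hbT⟩ := ih a hab
    exact ⟨b, ha.trans hb, hbb, haT.trans hbT⟩

/-- In a semistandard PBW-tableau, if `T_{i,j₁} = T_{i,j₂} ≠ i` for columns
`j₁ < j₂`, then `T_{i,j} = T_{i,j₁}` for all `j₁ ≤ j ≤ j₂`. -/
theorem sspbw_row_constant (n : ℕ) (hn : 2 ≤ n) (lam : ℕ → ℕ) (hlam : IsShape n lam)
    (T : ℕ → ℕ → ℕ) (hT : IsSSPBWTableau n lam T)
    (i j₁ j₂ : ℕ) (h12 : j₁ < j₂) (hb1 : IsBox lam i j₁) (hb2 : IsBox lam i j₂)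
    (heq : T i j₁ = T i j₂) (hne : T i j₁ ≠ i) :
    ∀ j, j₁ ≤ j → j ≤ j₂ → T i j = T i j₁ := by
  intro j hj1 hj2
  have hb : IsBox lam i j := ⟨hb1.1, hb1.2.1.trans hj1, hj2.trans hb2.2.2⟩
  have hdec := hT.1.2.2
  obtain ⟨d, rfl⟩ := Nat.exists_eq_add_of_le hj1
  obtain ⟨e, rfl⟩ := Nat.exists_eq_add_of_le hj2
  have top : ∀ k, i ≤ k → IsBox lam k j₁ → T k j₁ ≤ T i j₁ := by
    intro k hk hkb
    rcases hk.eq_or_lt with rfl | hlt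
    · exact le_rfl
    · exact (hdec i k j₁ hb1 hkb hlt hne).le
  apply le_antisymm
  · obtain ⟨k, hk, hkb, hkT⟩ := sspbw_chain n lam T hT j₁ hb1.2.1 d i hb
    exact hkT.trans (top k hk hkb)
  · obtain ⟨k, hk, hkb, hkT⟩ := sspbw_chain n lam T hT (j₁ + d) hb.2.1 e i hb2
    rcases hk.eq_or_lt with rfl | hlt
    · exact heq.trans_le hkT
    · obtain ⟨m, hm, hmb, hmT⟩ := sspbw_chain n lam T hT j₁ hb1.2.1 d k hkb
      have := hdec i m j₁ hb1 hmb (hlt.trans_le hm) hne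
      omega
end

section
/- Let T be a semistandard PBW-tableau of shape λ. If (i_1,j_1) and (i_2,j_2) are boxes of Y_λ with i_1 ≤ i_2 and j_1 ≤ j_2, and T_{i_1,j_1} ≠ i_1 and T_{i_2,j_2} ≠ i_2, then T_{i_1,j_1} ≥ T_{i_2,j_2}; if in addition i_1 < i_2, then T_{i_1,j_1} > T_{i_2,j_2}. -/
open scoped BigOperators

/-- In a semistandard PBW-tableau, if `(i₁,j₁)` and `(i₂,j₂)` are boxes with
`i₁ ≤ i₂`, `j₁ ≤ j₂`, `T_{i₁,j₁} ≠ i₁` and `T_{i₂,j₂} ≠ i₂`, then `T_{i₁,j₁} ≥ T_{i₂,j₂}`;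
if moreover `i₁ < i₂`, then `T_{i₁,j₁} > T_{i₂,j₂}`. -/
theorem sspbw_monotone (n : ℕ) (hn : 2 ≤ n) (lam : ℕ → ℕ) (hlam : IsShape n lam)
    (T : ℕ → ℕ → ℕ) (hT : IsSSPBWTableau n lam T)
    (i₁ j₁ i₂ j₂ : ℕ) (hb1 : IsBox lam i₁ j₁) (hb2 : IsBox lam i₂ j₂)
    (hi : i₁ ≤ i₂) (hj : j₁ ≤ j₂) (hne1 : T i₁ j₁ ≠ i₁) (hne2 : T i₂ j₂ ≠ i₂) :
    T i₂ j₂ ≤ T i₁ j₁ ∧ (i₁ < i₂ → T i₂ j₂ < T i₁ j₁) := by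
  obtain ⟨⟨-, -, hdec⟩, hss⟩ := hT
  have key : ∀ d i, IsBox lam i (j₁ + d) →
      ∃ i', i ≤ i' ∧ IsBox lam i' j₁ ∧ T i (j₁ + d) ≤ T i' j₁ := by
    intro d
    induction d with
    | zero => exact fun i h => ⟨i, le_rfl, h, le_rfl⟩
    | succ d ih =>
      intro i h
      have h1 : 1 ≤ j₁ := hb1.2.1
      obtain ⟨a, ha, hab, hT1⟩ := hss i (j₁ + (d + 1)) h (by omega)
      have e : j₁ + (d + 1) - 1 = j₁ + d := by omega
      rw [e] at hab hT1
      obtain ⟨b, hb, hbb, hT2⟩ := ih a hab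
      exact ⟨b, ha.trans hb, hbb, hT1.trans hT2⟩
  obtain ⟨d, rfl⟩ := Nat.exists_eq_add_of_le hj
  obtain ⟨b, hb, hbb, hle⟩ := key d i₂ hb2
  rcases (hi.trans hb).eq_or_lt with h | h
  · subst h
    exact ⟨hle, fun h => absurd h (by omega)⟩
  · have := hdec i₁ b j₁ hb1 hbb h hne1
    exact ⟨by omega, fun _ => by omega⟩
end

section
/- Let T be a semistandard PBW-tableau of shape λ and let k < l be integers such that l occurs as an entry in row k of T. Let A = A_col(k,l) be the minimal number such that T_{k,A+1} = l. Then: (i) if A ≥ 1, there exists a row index i ≥ k with the box (i,A) in Y_λ and T_{i,A} ≥ l; (ii) for every box (i,j) of Y_λ with i > k and j > A, one has T_{i,j} < l. -/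
open scoped BigOperators

/-- Let `T` be a semistandard PBW-tableau, `k < l`, and suppose `l` occurs
in row `k`, with `A = A_col(k,l)` minimal such that `T_{k,A+1} = l`. Then (i) if `A ≥ 1`
there is a row `i ≥ k` with `T_{i,A} ≥ l`, and (ii) `T_{i,j} < l` for every box `(i,j)` with
`i > k` and `j > A`. -/
theorem sspbw_Acol (n : ℕ) (hn : 2 ≤ n) (lam : ℕ → ℕ) (hlam : IsShape n lam)
    (T : ℕ → ℕ → ℕ) (hT : IsSSPBWTableau n lam T)
    (k l A : ℕ) (hkl : k < l)
    (hbox : IsBox lam k (A + 1)) (hval : T k (A + 1) = l)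
    (hmin : ∀ j, 1 ≤ j → j ≤ A → T k j ≠ l) :
    (1 ≤ A → ∃ i, k ≤ i ∧ IsBox lam i A ∧ l ≤ T i A) ∧
    (∀ i j, IsBox lam i j → k < i → A < j → T i j < l) := by
  obtain ⟨⟨_, _, hdec⟩, hss⟩ := hT
  constructor
  · intro hA
    obtain ⟨i, hi, hb, hle⟩ := hss k (A + 1) hbox (by omega)
    exact ⟨i, hi, hb, by simpa [hval] using hle⟩
  · intro i j hb hi hj
    induction j, hj using Nat.le_induction generalizing i with
    | base =>
      have h := hdec k i (A + 1) hbox hb hi (by omega)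
      rw [hval] at h
      exact h
    | succ j hj ih =>
      obtain ⟨i', hi', hb', hle⟩ := hss i (j + 1) hb (by omega)
      rw [Nat.add_sub_cancel] at hb' hle
      exact lt_of_le_of_lt hle (ih i' hb' (by omega))
end

section
/- Let p ≥ q with p, q ∈ {d_1,…,d_s}, let 1 ≤ k ≤ q, and let L = (l_1,…,l_p) and J = (j_1,…,j_q) be tuples of distinct elements of {1,…,n} such that {j_1,…,j_k} ∩ {q+1,…,p} = ∅. For 1 ≤ r_1 < … < r_k ≤ p let (L',J') be obtained from (L,J) by exchanging the entries (l_{r_1},…,l_{r_k}) with (j_1,…,j_k). If the entries of L' are pairwise distinct and the entries of J' are pairwise distinct, then deg L' + deg J' = deg L + deg J + #{i : q+1 ≤ l_{r_i} ≤ p}; in particular, the degenerate Plücker relation R^{k;a}_{L,J} consists precisely of the terms of the classical Plücker relation R^k_{L,J} whose total PBW degree is minimal. -/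
open scoped BigOperators

/-- Exchange in `L` the entries at the positions in `S` (`S = {r_1 < … < r_k}`) with the
first `S.card` entries of `J`; returns the new pair `(L', J')` where
`J' = (l_{r_1},…,l_{r_k}, j_{k+1},…,j_q)`. -/
def exch (L J : List ℕ) (S : Finset (Fin L.length)) : List ℕ × List ℕ :=
  ((List.finRange L.length).map
      (fun i => if i ∈ S then J.getD (S.filter (· < i)).card 0 else L.get i),
   (S.sort (· ≤ ·)).map L.get ++ J.drop S.card)

/-- `(k, L, J)` is a valid datum for a (degenerate) Plücker relation: `|L| = p ≥ q = |J|`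
with `p, q ∈ {d_1,…,d_s}`, `1 ≤ k ≤ q` and all entries in `{1,…,n}`. -/
def ValidRel (n : ℕ) (D : Finset ℕ) (k : ℕ) (L J : List ℕ) : Prop :=
  L.length ∈ D ∧ J.length ∈ D ∧ J.length ≤ L.length ∧ 1 ≤ k ∧ k ≤ J.length ∧
  (∀ x ∈ L, x ∈ Finset.Icc 1 n) ∧ (∀ x ∈ J, x ∈ Finset.Icc 1 n)

/-- PBW degree of a list: the number of entries exceeding the length of the list. -/
def ldeg (l : List ℕ) : ℕ := (l.filter (fun x => decide (l.length < x))).length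

theorem aux_cnt (p : ℕ → Bool) (l : List ℕ) :
    (l.filter p).length = (l.map (fun x => if p x then 1 else 0)).sum := by
  induction l with
  | nil => simp
  | cons a l ih =>
    by_cases h : p a
    · simp [List.filter_cons, h, ih, Nat.add_comm]
    · simp [List.filter_cons, h, ih]

theorem aux_rank {m : ℕ} (f : ℕ → ℕ) (S : Finset (Fin m)) :
    ∑ i ∈ S, f (S.filter (· < i)).card = ∑ j ∈ Finset.range S.card, f j := by
  induction S using Finset.induction_on_max with
  | empty => simp
  | insert a S ha ih =>
    have hn : a ∉ S := fun h => lt_irrefl _ (ha a h)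
    rw [Finset.sum_insert hn, Finset.card_insert_of_notMem hn, Finset.sum_range_succ, ← ih,
      add_comm]
    congr 1
    · refine Finset.sum_congr rfl fun i hi => ?_
      rw [Finset.filter_insert, if_neg (not_lt.2 (ha i hi).le)]
    · rw [Finset.filter_insert, if_neg (lt_irrefl _), Finset.filter_true_of_mem ha]

theorem aux_finRange {m : ℕ} (f : Fin m → ℕ) :
    ((List.finRange m).map f).sum = ∑ i, f i := by
  rw [← List.ofFn_eq_map, List.sum_ofFn]

theorem aux_sort {m : ℕ} (S : Finset (Fin m)) (f : Fin m → ℕ) :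
    ((S.sort (· ≤ ·)).map f).sum = ∑ i ∈ S, f i := by
  have : S.val = ((S.sort (· ≤ ·) : List (Fin m)) : Multiset (Fin m)) :=
    (Finset.sort_eq S (· ≤ ·)).symm
  rw [Finset.sum, this, Multiset.map_coe, Multiset.sum_coe]

theorem aux_take (f : ℕ → ℕ) (J : List ℕ) (k : ℕ) (hk : k ≤ J.length) :
    (J.map f).sum = ∑ j ∈ Finset.range k, f (J.getD j 0) + ((J.drop k).map f).sum := by
  induction k generalizing J with
  | zero => simp
  | succ k ih =>
    cases J with
    | nil => simp at hk
    | cons a J =>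
      simp only [List.length_cons, Nat.add_le_add_iff_right] at hk
      rw [Finset.sum_range_succ']
      simp [ih J hk]
      omega

/-- Exchanging the entries of `L` at positions `S` with the first `k`
entries of `J` (which avoid `{q+1,…,p}`) raises the total PBW degree by
`#{i ∈ S : q+1 ≤ l_i ≤ p}`; in particular the terms kept in `R^{k;a}_{L,J}` are exactly the
terms of `R^k_{L,J}` of minimal total PBW degree. -/
theorem exch_pbw_degree (n : ℕ) (hn : 2 ≤ n)
    (D : Finset ℕ) (hDne : D.Nonempty) (hD : ∀ d ∈ D, 1 ≤ d ∧ d ≤ n - 1)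
    (k : ℕ) (L J : List ℕ) (hvalid : ValidRel n D k L J)
    (hLnd : L.Nodup) (hJnd : J.Nodup)
    (hjk : ∀ m, m < k → ¬ (J.length + 1 ≤ J.getD m 0 ∧ J.getD m 0 ≤ L.length))
    (S : Finset (Fin L.length)) (hS : S.card = k)
    (hL' : (exch L J S).1.Nodup) (hJ' : (exch L J S).2.Nodup) :
    ldeg (exch L J S).1 + ldeg (exch L J S).2 =
      ldeg L + ldeg J +
        (S.filter (fun i => J.length + 1 ≤ L.get i ∧ L.get i ≤ L.length)).card ∧
    ((∀ i ∈ S, ¬ (J.length + 1 ≤ L.get i ∧ L.get i ≤ L.length)) ↔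
      ldeg (exch L J S).1 + ldeg (exch L J S).2 = ldeg L + ldeg J) := by
  obtain ⟨-, -, hqp, -, hkq, -, -⟩ := hvalid
  have main : ldeg (exch L J S).1 + ldeg (exch L J S).2 =
      ldeg L + ldeg J +
        (S.filter (fun i => J.length + 1 ≤ L.get i ∧ L.get i ≤ L.length)).card := by
    have hl1 : (exch L J S).1.length = L.length := by simp [exch]
    have hl2 : (exch L J S).2.length = J.length := by simp [exch]; omega
    let P : ℕ → ℕ := fun x => if decide (L.length < x) = true then 1 else 0
    let Q : ℕ → ℕ := fun x => if decide (J.length < x) = true then 1 else 0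
    have e1 : ldeg (exch L J S).1 = ∑ j ∈ Finset.range k, P (J.getD j 0)
        + ∑ i ∈ Sᶜ, P (L.get i) := by
      unfold ldeg
      rw [hl1, aux_cnt]
      simp only [exch, List.map_map]
      rw [aux_finRange, ← Finset.sum_add_sum_compl S, ← hS,
        ← aux_rank (fun j => P (J.getD j 0)) S]
      congr 1
      · refine Finset.sum_congr rfl fun i hi => ?_
        simp only [Function.comp, if_pos hi, P]
      · refine Finset.sum_congr rfl fun i hi => ?_
        simp only [Function.comp, if_neg (Finset.mem_compl.1 hi), P]
    have e2 : ldeg (exch L J S).2 = ∑ i ∈ S, Q (L.get i) + ((J.drop k).map Q).sum := by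
      unfold ldeg
      rw [hl2, aux_cnt]
      simp only [exch, List.map_append, List.map_map, List.sum_append, hS]
      rw [aux_sort]
      rfl
    have e3 : ldeg L = ∑ i ∈ S, P (L.get i) + ∑ i ∈ Sᶜ, P (L.get i) := by
      unfold ldeg
      rw [aux_cnt, Finset.sum_add_sum_compl, ← aux_finRange]
      conv_lhs => rw [← List.map_get_finRange L, List.map_map]
      simp [P, Function.comp_def]
    have e4 : ldeg J = ∑ j ∈ Finset.range k, Q (J.getD j 0) + ((J.drop k).map Q).sum := by
      unfold ldeg
      rw [aux_cnt]
      exact aux_take Q J k hkq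
    have e5 : ∑ j ∈ Finset.range k, P (J.getD j 0) = ∑ j ∈ Finset.range k, Q (J.getD j 0) := by
      refine Finset.sum_congr rfl fun j hj => ?_
      have := hjk j (Finset.mem_range.1 hj)
      simp only [P, Q, decide_eq_true_eq]
      split_ifs <;> omega
    have e6 : ∑ i ∈ S, Q (L.get i) = ∑ i ∈ S, P (L.get i) +
        (S.filter (fun i => J.length + 1 ≤ L.get i ∧ L.get i ≤ L.length)).card := by
      rw [Finset.card_filter, ← Finset.sum_add_distrib]
      refine Finset.sum_congr rfl fun i hi => ?_
      simp only [P, Q, decide_eq_true_eq]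
      split_ifs <;> omega
    omega
  refine ⟨main, ?_⟩
  rw [main, Nat.add_eq_left, Finset.card_eq_zero, Finset.filter_eq_empty_iff]
end
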